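/- Let V and H be finite-dimensional complex vector spaces with dim V = q, let ψ : ⋀²V → H be a linear map, and let k ≥ 1 be an integer with 2k ≤ q. Suppose that every non-zero element of the kernel of ψ has rank bigger than 2k (i.e., no non-zero element of ker ψ is a sum of at most k decomposable bivectors). Then there exists a 2k-dimensional linear subspace W ⊆ V such that the complex 0 → Σ²W → W ⊗ V → H is exact, where the first map μ₀ sends the symmetric product w·w′ to w⊗w′ + w′⊗w and the second map μ₁ sends w⊗v to ψ(w ∧ v); exactness means that μ₀ is injective and that the kernel of μ₁ equals the image of μ₀. -/

import Mathlib

open Module ExteriorAlgebra TensorProduct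

/-- The wedge product of two vectors, as an element of the second exterior power `⋀²V`. -/
noncomputable def wedge {V : Type*} [AddCommGroup V] [Module ℂ V] (x y : V) : ⋀[ℂ]^2 V :=
  ⟨ExteriorAlgebra.ι ℂ x * ExteriorAlgebra.ι ℂ y, by
    rw [show (⋀[ℂ]^2 V : Submodule ℂ (ExteriorAlgebra ℂ V))
        = (LinearMap.range (ExteriorAlgebra.ι ℂ : V →ₗ[ℂ] ExteriorAlgebra ℂ V)) ^ 2 from rfl,
      pow_two]
    exact Submodule.mul_mem_mul (LinearMap.mem_range_self _ x) (LinearMap.mem_range_self _ y)⟩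

/-- The submodule of symmetry relations defining the second symmetric power `Σ²W`. -/
abbrev Sym2Rel (K : Type*) [CommRing K] (W : Type*) [AddCommGroup W] [Module K W] :
    Submodule K (W ⊗[K] W) :=
  Submodule.span K {x : W ⊗[K] W | ∃ a b : W, x = a ⊗ₜ[K] b - b ⊗ₜ[K] a}

/-- The second symmetric power `Σ²W` of a module `W`, as a quotient of `W ⊗ W`. -/
abbrev Sym2Pow (K : Type*) [CommRing K] (W : Type*) [AddCommGroup W] [Module K W] :=
  (W ⊗[K] W) ⧸ Sym2Rel K W

/-- The symmetric product `w·w' ∈ Σ²W` of two elements of `W`. -/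
noncomputable def Sym2Pow.mk (K : Type*) [CommRing K] {W : Type*} [AddCommGroup W] [Module K W]
    (a b : W) : Sym2Pow K W :=
  Submodule.Quotient.mk (a ⊗ₜ[K] b)

/-- The coordinate matrix `∑ᵢ (xᵢ yᵢᵀ - yᵢ xᵢᵀ)` of the bivector `∑ᵢ xᵢ ∧ yᵢ`, where
`xᵢ = z (inl i)` and `yᵢ = z (inr i)`. -/
def skewMatrix {R n ι : Type*} [CommRing R] [Fintype ι] (z : ι ⊕ ι → n → R) : Matrix n n R :=
  fun a b => ∑ i, (z (.inl i) a * z (.inr i) b - z (.inr i) a * z (.inl i) b)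

/-- The directional derivative of `skewMatrix` at `z` in the direction `t`. -/
def skewMatrixDeriv {R n ι : Type*} [CommRing R] [Fintype ι] (z t : ι ⊕ ι → n → R) :
    Matrix n n R :=
  fun a b => ∑ i, (z (.inl i) a * t (.inr i) b + t (.inl i) a * z (.inr i) b
    - (z (.inr i) a * t (.inl i) b + t (.inr i) a * z (.inl i) b))

theorem skewMatrix_map {R S n ι : Type*} [CommRing R] [CommRing S] [Fintype ι] (f : R →+* S)
    (z : ι ⊕ ι → n → R) (a b : n) :
    f (skewMatrix z a b) = skewMatrix (fun s c => f (z s c)) a b := by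
  simp [skewMatrix]

/-- Minors of `skewMatrix z` of size larger than the number of vectors vanish. -/
theorem det_submatrix_skewMatrix {F n ι κ : Type*} [Field F] [Fintype ι] [Fintype κ]
    [DecidableEq κ] (hκ : Fintype.card (ι ⊕ ι) < Fintype.card κ)
    (z : ι ⊕ ι → n → F) (f g : κ → n) :
    ((skewMatrix z).submatrix f g).det = 0 := by
  classical
  by_contra h
  have hr := Matrix.rank_of_isUnit _ ((Matrix.isUnit_iff_isUnit_det _).2 (isUnit_iff_ne_zero.2 h))
  have hprod : (skewMatrix z).submatrix f g =
      (Matrix.of fun (c : κ) (s : ι ⊕ ι) => z s (f c)) *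
      (Matrix.of fun (s : ι ⊕ ι) (c : κ) =>
        Sum.elim (fun i => z (.inr i) (g c)) (fun i => - z (.inl i) (g c)) s) := by
    ext a b
    simp [skewMatrix, Matrix.mul_apply, sub_eq_add_neg,
      Finset.sum_add_distrib]
  rw [hprod] at hr
  exact hκ.not_ge (hr.ge.trans ((Matrix.rank_mul_le_left _ _).trans (Matrix.rank_le_card_width _)))

/-- A skew-symmetric matrix whose minors of size `2k+1` vanish is the coordinate matrix of a sum
of `k` decomposable bivectors. -/
theorem exists_eq_skewMatrix {F n : Type*} [Field F] [NeZero (2 : F)] (k : ℕ) :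
    ∀ (Z : Matrix n n F), (∀ a b, Z a b = - Z b a) →
    (∀ f g : Fin (2 * k + 1) → n, (Z.submatrix f g).det = 0) →
    ∃ z : Fin k ⊕ Fin k → n → F, Z = skewMatrix z := by
  induction k with
  | zero =>
    intro Z _ hdet
    refine ⟨fun _ _ => 0, ?_⟩
    ext a b
    simpa [skewMatrix] using hdet (fun _ => a) (fun _ => b)
  | succ k ih =>
    intro Z hskew hdet
    by_cases hZ : Z = 0
    · exact ⟨fun _ _ => 0, by ext a b; simp [skewMatrix, hZ]⟩
    obtain ⟨a, b, hab⟩ : ∃ a b, Z a b ≠ 0 := by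
      by_contra! h
      exact hZ (by ext a b; exact h a b)
    have hdiag : ∀ c, Z c c = 0 := fun c => by
      have := hskew c c
      have h2 : (2 : F) * Z c c = 0 := by linear_combination this
      simpa [NeZero.ne (2 : F)] using h2
    set Z' : Matrix n n F := fun c d =>
      Z c d - (Z a b)⁻¹ * (Z a c * Z b d - Z b c * Z a d) with hZ'
    obtain ⟨z, hz⟩ := ih Z' (fun c d => by simp only [hZ']; rw [hskew c d]; ring) (by
      intro f g
      let A : Matrix (Fin 2) (Fin 2) F := Z.submatrix ![a, b] ![a, b]
      have hA : A = !![0, Z a b; -Z a b, 0] := by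
        ext i j
        fin_cases i <;> fin_cases j <;> simp [A, hdiag, ← hskew b a, -Matrix.submatrix_cons_row]
      have hAdet : A.det = Z a b * Z a b := by rw [hA]; simp [Matrix.det_fin_two]
      have hAi : A * !![0, -(Z a b)⁻¹; (Z a b)⁻¹, 0] = 1 := by
        rw [hA]
        ext i j
        fin_cases i <;> fin_cases j <;> simp [Matrix.mul_apply, hab]
      let _ : Invertible A := invertibleOfRightInverse _ _ hAi
      have hinv : ⅟A = !![0, -(Z a b)⁻¹; (Z a b)⁻¹, 0] := rfl
      let e : Fin 2 ⊕ Fin (2 * k + 1) ≃ Fin (2 * (k + 1) + 1) :=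
        finSumFinEquiv.trans (finCongr (by ring))
      have h1 := hdet (Sum.elim ![a, b] f ∘ e.symm) (Sum.elim ![a, b] g ∘ e.symm)
      have h2 : (Z.submatrix (Sum.elim ![a, b] f ∘ e.symm) (Sum.elim ![a, b] g ∘ e.symm)) =
          (Matrix.fromBlocks A (Z.submatrix ![a, b] g) (Z.submatrix f ![a, b])
            (Z.submatrix f g)).submatrix e.symm e.symm := by
        ext i j
        simp only [Matrix.submatrix_apply, Function.comp]
        rcases e.symm i with i | i <;> rcases e.symm j with j | j <;> rfl
      rw [h2, Matrix.det_submatrix_equiv_self, Matrix.det_fromBlocks₁₁, hAdet] at h1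
      have h3 := (mul_eq_zero.1 h1).resolve_left (mul_ne_zero hab hab)
      rw [← h3, hinv]
      congr 1
      ext i j
      change Z (f i) (g j) - (Z a b)⁻¹ * (Z a (f i) * Z b (g j) - Z b (f i) * Z a (g j)) = _
      simp only [Matrix.submatrix_apply, Matrix.sub_apply, Matrix.mul_apply, Fin.sum_univ_two,
        Matrix.of_apply, Matrix.cons_val_zero, Matrix.cons_val_one]
      rw [hskew (f i) a, hskew (f i) b]
      ring)
    refine ⟨Sum.elim (Fin.cons (fun c => (Z a b)⁻¹ * Z a c) fun i => z (.inl i))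
      (Fin.cons (fun c => Z b c) fun i => z (.inr i)), ?_⟩
    ext c d
    have := congrFun (congrFun hz c) d
    simp only [skewMatrix, hZ'] at this
    simp only [skewMatrix, Fin.sum_univ_succ, Sum.elim_inl, Sum.elim_inr, Fin.cons_zero,
      Fin.cons_succ, ← this]
    ring

theorem skewMatrix_eq_neg {R n ι : Type*} [CommRing R] [Fintype ι] (z : ι ⊕ ι → n → R) (a b : n) :
    skewMatrix z a b = - skewMatrix z b a := by
  simp only [skewMatrix, ← Finset.sum_neg_distrib]
  exact Finset.sum_congr rfl fun _ _ => by ring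

/-- Suppose that the linear forms `c j` have no common non-zero zero on the cone of matrices
`skewMatrix z` over `F`. Then, over any non-trivial `F`-algebra, no common zero of them satisfying
the equations of the cone has an entry equal to `1`. -/
theorem ne_one_of_minors_eq_zero {F n J B : Type*} [Field F] [IsAlgClosed F] [NeZero (2 : F)]
    [Fintype n] [CommRing B] [Nontrivial B] [Algebra F B] (k : ℕ) (c : J → n → n → F)
    (hc : ∀ z : Fin k ⊕ Fin k → n → F,
      (∀ j, ∑ a, ∑ b, c j a b * skewMatrix z a b = 0) → skewMatrix z = 0)
    (M : Matrix n n B) (hskew : ∀ a b, M a b = - M b a)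
    (hdet : ∀ f g : Fin (2 * k + 1) → n, (M.submatrix f g).det = 0)
    (hM : ∀ j, ∑ a, ∑ b, algebraMap F B (c j a b) * M a b = 0) (a b : n) : M a b ≠ 1 := by
  intro hab
  let φ : MvPolynomial (n × n) F →ₐ[F] B := MvPolynomial.aeval fun p => M p.1 p.2
  obtain ⟨I, hI, hle⟩ := Ideal.exists_le_maximal _ (RingHom.ker_ne_top φ)
  obtain ⟨x, hx⟩ := (MvPolynomial.isMaximal_iff_eq_vanishingIdeal_singleton).1 hI
  have heval : ∀ p : MvPolynomial (n × n) F, φ p = 0 → MvPolynomial.eval x p = 0 := by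
    intro p hp
    have : p ∈ I := hle hp
    rw [hx, MvPolynomial.mem_vanishingIdeal_singleton_iff] at this
    rwa [MvPolynomial.aeval_eq_eval] at this
  let Z : Matrix n n F := fun c d => x (c, d)
  let X : Matrix n n (MvPolynomial (n × n) F) := fun c d => MvPolynomial.X (c, d)
  have hXM : ∀ c d, φ (X c d) = M c d := fun c d => by simp [φ, X]
  have hXZ : ∀ c d, MvPolynomial.eval x (X c d) = Z c d := fun c d => by simp [X, Z]
  obtain ⟨z, hz⟩ := exists_eq_skewMatrix k Z
    (fun c d => by
      have := heval (X c d + X d c) (by rw [map_add, hXM, hXM, hskew c d]; ring)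
      rw [map_add, hXZ, hXZ] at this
      linear_combination this)
    (fun f g => by
      have := heval (X.submatrix f g).det (by
        rw [AlgHom.map_det]
        convert! hdet f g
        ext i j
        exact hXM _ _)
      rw [RingHom.map_det] at this
      convert! this
      ext i j
      exact (hXZ _ _).symm)
  have hZ := hc z (fun j => by
    have := heval (∑ a, ∑ b, MvPolynomial.C (c j a b) * X a b) (by
      rw [← hM j]
      simp only [map_sum, map_mul, hXM]
      simp [φ])
    simpa [hXZ, hz] using this)
  have := heval (X a b - 1) (by rw [map_sub, hXM, hab]; simp)
  rw [map_sub, hXZ, hz, hZ] at this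
  simp at this

/-- If the linear forms `c j` have no common non-zero zero on the cone of matrices `skewMatrix z`
over `F`, then the entries of any such matrix over an `F`-algebra `P` are integral over the
subalgebra generated by the values of these forms. -/
theorem isIntegral_skewMatrix {F n J P : Type*} [Field F] [IsAlgClosed F] [NeZero (2 : F)]
    [Fintype n] [CommRing P] [Algebra F P] (L : Type*) [Field L] [Algebra P L] [IsFractionRing P L]
    [Algebra F L] [IsScalarTower F P L] (k : ℕ) (c : J → n → n → F)
    (hc : ∀ z : Fin k ⊕ Fin k → n → F,
      (∀ j, ∑ a, ∑ b, c j a b * skewMatrix z a b = 0) → skewMatrix z = 0)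
    (z : Fin k ⊕ Fin k → n → P) (a b : n) :
    IsIntegral (Algebra.adjoin F (Set.range fun j =>
      ∑ a, ∑ b, algebraMap F P (c j a b) * skewMatrix z a b)) (skewMatrix z a b) := by
  classical
  set A := Algebra.adjoin F (Set.range fun j =>
      ∑ a, ∑ b, algebraMap F P (c j a b) * skewMatrix z a b) with hA
  let M : Matrix n n L := skewMatrix fun s d => algebraMap P L (z s d)
  have hMz : ∀ a b, algebraMap P L (skewMatrix z a b) = M a b := fun a b =>
    skewMatrix_map (algebraMap P L) z a b
  let R : Subring L := (algebraMap A L).range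
  suffices h : M a b ∈ (integralClosure (Subring.closure (R : Set L)) L).toSubring by
    rw [Subring.closure_eq] at h
    have h' : IsIntegral R (M a b) := h
    let _ : Algebra A R := (algebraMap A L).rangeRestrict.toAlgebra
    have : IsScalarTower A R L := IsScalarTower.of_algebraMap_eq fun _ => rfl
    have : Algebra.IsIntegral A R :=
      ⟨fun x => by
        obtain ⟨y, rfl⟩ := (algebraMap A L).rangeRestrict_surjective x
        exact isIntegral_algebraMap⟩
    have h2 : IsIntegral A (M a b) := isIntegral_trans _ h'
    rw [← hMz] at h2
    exact (isIntegral_algebraMap_iff (IsFractionRing.injective P L)).1 h2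
  rw [← iInf_valuationSubring_superset]
  simp only [Subring.mem_iInf]
  rintro ⟨V, hV⟩
  by_contra hab
  have hab : M a b ∉ V := hab
  obtain ⟨⟨a', b'⟩, -, hmax⟩ := Finset.exists_max_image (Finset.univ : Finset (n × n))
    (fun p => V.valuation (M p.1 p.2)) ⟨(a, b), Finset.mem_univ _⟩
  simp only [Finset.mem_univ, forall_true_left, Prod.forall] at hmax
  set m := M a' b' with hm
  have hm1 : 1 < V.valuation m := by
    refine lt_of_lt_of_le ?_ (hmax a b)
    rwa [← not_le, V.valuation_le_one_iff]
  have hm0 : m ≠ 0 := by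
    rintro h
    rw [h, map_zero] at hm1
    exact not_lt_zero hm1
  have hmem : ∀ c d, m⁻¹ * M c d ∈ V := fun c d => by
    rw [← V.valuation_le_one_iff, map_mul, map_inv₀]
    exact inv_mul_le_one_of_le₀ (hmax c d) zero_le
  have hFA : ∀ y ∈ A, algebraMap P L y ∈ V := fun y hy => hV ⟨⟨y, hy⟩, rfl⟩
  let ι : F →+* V := (algebraMap F L).codRestrict V.toSubring fun y => by
    have := hFA _ (A.algebraMap_mem y)
    rwa [← IsScalarTower.algebraMap_apply] at this
  let κ := IsLocalRing.ResidueField V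
  let _ : Algebra F κ := ((IsLocalRing.residue V).comp ι).toAlgebra
  let N : Matrix n n V := fun c d => ⟨m⁻¹ * M c d, hmem c d⟩
  refine ne_one_of_minors_eq_zero (B := κ) k c hc (fun c d => IsLocalRing.residue V (N c d))
    (fun c d => ?_) (fun f g => ?_) (fun j => ?_) a' b' ?_
  · rw [← map_neg]
    congr 1
    ext
    simp [N, M, skewMatrix_eq_neg _ c d]
  · have h0 : (N.submatrix f g).det = 0 := by
      apply Subtype.val_injective
      change V.subtype _ = _
      rw [RingHom.map_det]
      have : (RingHom.mapMatrix V.subtype) (N.submatrix f g) = m⁻¹ • (M.submatrix f g) := by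
        ext i j
        rfl
      rw [this, Matrix.det_smul, det_submatrix_skewMatrix (by simp; omega)]
      simp
    have := congrArg (IsLocalRing.residue V) h0
    rw [RingHom.map_det, map_zero] at this
    exact this
  · have : ∑ a, ∑ b, algebraMap F κ (c j a b) * IsLocalRing.residue V (N a b) =
        IsLocalRing.residue V (∑ a, ∑ b, ι (c j a b) * N a b) := by
      simp only [map_sum, map_mul]
      rfl
    rw [this, IsLocalRing.residue_eq_zero_iff, V.valuation_lt_one_iff]
    have hval : ((∑ a, ∑ b, ι (c j a b) * N a b : V) : L) = m⁻¹ * algebraMap P L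
        (∑ a, ∑ b, algebraMap F P (c j a b) * skewMatrix z a b) := by
      change V.subtype _ = _
      simp only [map_sum, map_mul, hMz, Finset.mul_sum]
      refine Finset.sum_congr rfl fun a _ => Finset.sum_congr rfl fun b _ => ?_
      rw [← IsScalarTower.algebraMap_apply]
      change algebraMap F L (c j a b) * (m⁻¹ * M a b) = _
      ring
    rw [hval, map_mul, map_inv₀]
    have hle := (V.valuation_le_one_iff _).2 (hFA _ (Algebra.subset_adjoin ⟨j, rfl⟩))
    refine lt_of_le_of_lt (mul_le_of_le_one_right' hle) (inv_lt_one_of_one_lt₀ hm1)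
  · rw [← map_one (IsLocalRing.residue V)]
    congr 1
    ext
    simp [N, ← hm, hm0]

/-- An element algebraic over a domain of characteristic zero is a simple root of a polynomial. -/
theorem exists_aeval_derivative_ne_zero {A P : Type*} [CommRing A] [IsDomain A] [CharZero A]
    [CommRing P] [IsDomain P] [Algebra A P] [FaithfulSMul A P] {x : P} (hx : IsAlgebraic A x) :
    ∃ f : Polynomial A, Polynomial.aeval x f = 0 ∧ Polynomial.aeval x f.derivative ≠ 0 := by
  classical
  obtain ⟨f, ⟨hf0, hfx⟩, hmin⟩ := WellFounded.has_min (measure Polynomial.natDegree).wf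
    {f : Polynomial A | f ≠ 0 ∧ Polynomial.aeval x f = 0} hx
  refine ⟨f, hfx, fun hd => ?_⟩
  have hdeg : f.natDegree ≠ 0 := fun h => by
    rw [Polynomial.eq_C_of_natDegree_eq_zero h] at hf0 hfx
    rw [Polynomial.aeval_C, FaithfulSMul.algebraMap_eq_zero_iff] at hfx
    exact hf0 (by rw [hfx, map_zero])
  exact hmin f.derivative
    ⟨fun h => hdeg (Polynomial.derivative_eq_zero.1 h), hd⟩
    (Polynomial.natDegree_derivative_lt hdeg)

/-- If a derivation `D` followed by a ring homomorphism `e` vanishes on a subalgebra `A`, then it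
satisfies the chain rule for polynomials with coefficients in `A`. -/
theorem Derivation.map_aeval_subalgebra {F P K : Type*} [CommRing F] [CommRing P] [Algebra F P]
    [CommRing K] (D : Derivation F P P) (e : P →+* K) (A : Subalgebra F P)
    (hA : ∀ y ∈ A, e (D y) = 0) (x : P) (f : Polynomial A) :
    e (D (Polynomial.aeval x f)) = e (Polynomial.aeval x f.derivative) * e (D x) := by
  induction f using Polynomial.induction_on' with
  | add p q hp hq => simp only [map_add, hp, hq, add_mul]
  | monomial m y =>
    have hy : e (D (algebraMap A P y)) = 0 := hA _ y.2
    simp only [Polynomial.aeval_monomial, Polynomial.derivative_monomial, Derivation.leibniz,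
      Derivation.leibniz_pow, map_add, map_mul, smul_eq_mul, hy, nsmul_eq_mul,
      _root_.map_natCast]
    ring

/-- If the linear forms `c j` have no common non-zero zero on the cone of matrices `skewMatrix z`,
then for some linearly independent family `z` they have no common non-zero zero on the tangent
space to the cone at `skewMatrix z`. -/
theorem exists_skewMatrixDeriv_eq_zero {F n J : Type*} [Field F] [IsAlgClosed F] [CharZero F]
    [Fintype n] (k : ℕ) (hk : 2 * k ≤ Fintype.card n) (c : J → n → n → F)
    (hc : ∀ z : Fin k ⊕ Fin k → n → F,
      (∀ j, ∑ a, ∑ b, c j a b * skewMatrix z a b = 0) → skewMatrix z = 0) :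
    ∃ z : Fin k ⊕ Fin k → n → F, LinearIndependent F z ∧
      ∀ t : Fin k ⊕ Fin k → n → F,
        (∀ j, ∑ a, ∑ b, c j a b * skewMatrixDeriv z t a b = 0) → skewMatrixDeriv z t = 0 := by
  classical
  let P := MvPolynomial ((Fin k ⊕ Fin k) × n) F
  let X : Fin k ⊕ Fin k → n → P := fun s a => MvPolynomial.X (s, a)
  set A := Algebra.adjoin F (Set.range fun j =>
      ∑ a, ∑ b, algebraMap F P (c j a b) * skewMatrix X a b) with hA
  have hsep : ∀ p : n × n, ∃ f : Polynomial A, Polynomial.aeval (skewMatrix X p.1 p.2) f = 0 ∧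
      Polynomial.aeval (skewMatrix X p.1 p.2) f.derivative ≠ 0 := fun p =>
    exists_aeval_derivative_ne_zero
      (isIntegral_skewMatrix (FractionRing P) k c hc X p.1 p.2).isAlgebraic
  choose f hf hf' using hsep
  obtain ⟨e⟩ : Nonempty ((Fin k ⊕ Fin k) ↪ n) :=
    Function.Embedding.nonempty_of_card_le (by simpa [two_mul] using hk)
  let Δ : P := (Matrix.of fun s t => X s (e t)).det
  have hΔeval : ∀ x : (Fin k ⊕ Fin k) × n → F, MvPolynomial.eval x Δ =
      (Matrix.of fun s t => x (s, e t)).det := fun x => by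
    simp only [Δ, RingHom.map_det]
    congr 1
    ext s t
    simp [X]
  have hΔ : Δ ≠ 0 := fun h => by
    have h1 := hΔeval fun p => if e p.1 = p.2 then 1 else 0
    have h2 : (Matrix.of fun s t : Fin k ⊕ Fin k => if e s = e t then (1 : F) else 0) = 1 := by
      ext s t
      simp [Matrix.one_apply]
    simp only [h2] at h1
    simp [h] at h1
  have hprod : Δ * ∏ p, Polynomial.aeval (skewMatrix X p.1 p.2) (f p).derivative ≠ 0 :=
    mul_ne_zero hΔ (Finset.prod_ne_zero_iff.2 fun p _ => hf' p)
  obtain ⟨x, hx⟩ : ∃ x, MvPolynomial.eval x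
      (Δ * ∏ p, Polynomial.aeval (skewMatrix X p.1 p.2) (f p).derivative) ≠ 0 := by
    by_contra! h
    exact hprod (MvPolynomial.funext fun x => by rw [h x, map_zero])
  rw [map_mul, map_prod] at hx
  have hxΔ := left_ne_zero_of_mul hx
  have hxf := Finset.prod_ne_zero_iff.1 (right_ne_zero_of_mul hx)
  refine ⟨fun s a => x (s, a), ?_, fun t ht => ?_⟩
  · rw [hΔeval] at hxΔ
    have hli := Matrix.linearIndependent_rows_of_det_ne_zero hxΔ
    exact LinearIndependent.of_comp (LinearMap.funLeft F F e) hli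
  · let D : Derivation F P P := MvPolynomial.mkDerivation F fun p => MvPolynomial.C (t p.1 p.2)
    have hDX : ∀ s a, D (X s a) = MvPolynomial.C (t s a) := fun s a =>
      MvPolynomial.mkDerivation_X _ _ _
    have hD : ∀ a b, MvPolynomial.eval x (D (skewMatrix X a b)) =
        skewMatrixDeriv (fun s a => x (s, a)) t a b := fun a b => by
      simp only [skewMatrix, skewMatrixDeriv, map_sum, map_sub, Derivation.leibniz, hDX, smul_eq_mul,
        map_add, map_mul, MvPolynomial.eval_C]
      refine Finset.sum_congr rfl fun i _ => ?_
      simp only [X, MvPolynomial.eval_X]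
      ring
    have hDA : ∀ y ∈ A, MvPolynomial.eval x (D y) = 0 := fun y hy => by
      induction hy using Algebra.adjoin_induction with
      | mem y hy =>
        obtain ⟨j, rfl⟩ := hy
        have hC : ∀ r, MvPolynomial.eval x (algebraMap F P r) = r := fun r => MvPolynomial.eval_C r
        rw [← ht j]
        simp [hD, hC]
      | algebraMap r => simp
      | add y z _ _ hy hz => simp [hy, hz]
      | mul y z _ _ hy hz => simp [hy, hz]
    ext a b
    have := D.map_aeval_subalgebra (MvPolynomial.eval x) A hDA (skewMatrix X a b) (f (a, b))
    rw [hf (a, b), map_zero, map_zero, hD] at this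
    exact (mul_eq_zero.1 this.symm).resolve_left (hxf (a, b) (Finset.mem_univ _))

theorem wedge_eq_ιMulti {V : Type*} [AddCommGroup V] [Module ℂ V] (x y : V) :
    wedge x y = exteriorPower.ιMulti ℂ 2 ![x, y] :=
  Subtype.ext (by simp [wedge, ExteriorAlgebra.ιMulti_apply])

/-- The wedge product of two vectors as a bilinear map. -/
noncomputable def wedgeBilin (V : Type*) [AddCommGroup V] [Module ℂ V] :
    V →ₗ[ℂ] V →ₗ[ℂ] ⋀[ℂ]^2 V :=
  LinearMap.mk₂ ℂ wedge
    (fun _ _ _ => Subtype.ext (by simp [wedge, add_mul]))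
    (fun _ _ _ => Subtype.ext (by simp [wedge]))
    (fun _ _ _ => Subtype.ext (by simp [wedge, mul_add]))
    (fun _ _ _ => Subtype.ext (by simp [wedge]))

theorem wedgeBilin_apply {V : Type*} [AddCommGroup V] [Module ℂ V] (x y : V) :
    wedgeBilin V x y = wedge x y := rfl

theorem wedgeBilin_swap {V : Type*} [AddCommGroup V] [Module ℂ V] (x y : V) :
    wedgeBilin V y x = -wedgeBilin V x y :=
  Subtype.ext (eq_neg_of_add_eq_zero_left (ExteriorAlgebra.ι_add_mul_swap y x))

/-- Two linear forms on `V` define a linear form on `⋀²V`. -/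
theorem exists_linearForm_wedgeBilin {V : Type*} [AddCommGroup V] [Module ℂ V]
    (f g : Module.Dual ℂ V) :
    ∃ φ : Module.Dual ℂ (⋀[ℂ]^2 V), ∀ x y, φ (wedgeBilin V x y) = f x * g y - g x * f y := by
  refine ⟨exteriorPower.pairingDual ℂ V 2 (exteriorPower.ιMulti ℂ 2 ![f, g]), fun x y => ?_⟩
  rw [wedgeBilin_apply, wedge_eq_ιMulti, exteriorPower.pairingDual_ιMulti_ιMulti,
    Matrix.det_fin_two]
  simp

theorem Module.Basis.sum_repr_mul_repr_smul {V M n : Type*} [AddCommGroup V] [Module ℂ V]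
    [AddCommGroup M] [Module ℂ M] [Fintype n] (e : Basis n ℂ V) (β : V →ₗ[ℂ] V →ₗ[ℂ] M) (x y : V) :
    ∑ a, ∑ b, (e.equivFun x a * e.equivFun y b) • β (e a) (e b) = β x y := by
  conv_rhs => rw [← e.sum_equivFun x, ← e.sum_equivFun y]
  simp only [map_sum, map_smul, LinearMap.sum_apply, LinearMap.smul_apply, mul_smul,
    Finset.smul_sum]
  rw [Finset.sum_comm]
  simp only [smul_comm (e.equivFun y _)]

theorem sum_skewMatrix_smul_wedgeBilin {V n ι : Type*} [AddCommGroup V] [Module ℂ V] [Fintype n]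
    [Fintype ι] (e : Basis n ℂ V) (u : ι ⊕ ι → V) :
    ∑ a, ∑ b, skewMatrix (fun s => e.equivFun (u s)) a b • wedgeBilin V (e a) (e b) =
      (2 : ℂ) • ∑ i, wedgeBilin V (u (.inl i)) (u (.inr i)) := by
  have h : ∑ a, ∑ b, skewMatrix (fun s => e.equivFun (u s)) a b • wedgeBilin V (e a) (e b) =
      ∑ i, (wedgeBilin V (u (.inl i)) (u (.inr i)) - wedgeBilin V (u (.inr i)) (u (.inl i))) := by
    simp only [← e.sum_repr_mul_repr_smul (wedgeBilin V) (u _), skewMatrix, Finset.sum_smul,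
      sub_smul]
    simp only [Finset.sum_sub_distrib, Finset.sum_comm (s := (Finset.univ : Finset ι))]
  rw [h, Finset.smul_sum]
  refine Finset.sum_congr rfl fun i _ => ?_
  rw [wedgeBilin_swap (u (.inl i))]
  module

theorem sum_skewMatrixDeriv_smul_wedgeBilin {V n ι : Type*} [AddCommGroup V] [Module ℂ V]
    [Fintype n] [Fintype ι] (e : Basis n ℂ V) (u t : ι ⊕ ι → V) :
    ∑ a, ∑ b, skewMatrixDeriv (fun s => e.equivFun (u s)) (fun s => e.equivFun (t s)) a b •
        wedgeBilin V (e a) (e b) =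
      (2 : ℂ) • ∑ i, (wedgeBilin V (u (.inl i)) (t (.inr i)) +
        wedgeBilin V (t (.inl i)) (u (.inr i))) := by
  have h : ∑ a, ∑ b, skewMatrixDeriv (fun s => e.equivFun (u s)) (fun s => e.equivFun (t s)) a b •
        wedgeBilin V (e a) (e b) =
      ∑ i, (wedgeBilin V (u (.inl i)) (t (.inr i)) + wedgeBilin V (t (.inl i)) (u (.inr i)) -
        (wedgeBilin V (u (.inr i)) (t (.inl i)) + wedgeBilin V (t (.inr i)) (u (.inl i)))) := by
    simp only [← e.sum_repr_mul_repr_smul (wedgeBilin V) (u _),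
      ← e.sum_repr_mul_repr_smul (wedgeBilin V) (t _), skewMatrixDeriv, Finset.sum_smul,
      sub_smul, add_smul]
    simp only [Finset.sum_sub_distrib, Finset.sum_add_distrib,
      Finset.sum_comm (s := (Finset.univ : Finset ι))]
  rw [h, Finset.smul_sum]
  refine Finset.sum_congr rfl fun i _ => ?_
  rw [wedgeBilin_swap (t (.inl i)), wedgeBilin_swap (u (.inl i))]
  module

/-- If `ker ψ` contains no non-zero sum of `k` decomposable bivectors, then for some linearly
independent family `w` of `2k` vectors it contains no non-zero element of `span w ∧ V`. -/
theorem exists_linearIndependent_sum_wedgeBilin_eq_zero {V H : Type*} [AddCommGroup V] [Module ℂ V]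
    [FiniteDimensional ℂ V] [AddCommGroup H] [Module ℂ H] [FiniteDimensional ℂ H]
    (k : ℕ) (hk : 2 * k ≤ Module.finrank ℂ V) (ψ : (⋀[ℂ]^2 V) →ₗ[ℂ] H)
    (hker : ∀ x y : Fin k → V, ψ (∑ i, wedgeBilin V (x i) (y i)) = 0 →
      ∑ i, wedgeBilin V (x i) (y i) = 0) :
    ∃ w : Fin k ⊕ Fin k → V, LinearIndependent ℂ w ∧ ∀ v : Fin k ⊕ Fin k → V,
      ψ (∑ s, wedgeBilin V (w s) (v s)) = 0 → ∑ s, wedgeBilin V (w s) (v s) = 0 := by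
  let e := Module.finBasis ℂ V
  let h := Module.finBasis ℂ H
  have hsum : ∀ (Z : Matrix (Fin (finrank ℂ V)) (Fin (finrank ℂ V)) ℂ) (j),
      ∑ a, ∑ b, h.repr (ψ (wedgeBilin V (e a) (e b))) j * Z a b =
        h.repr (ψ (∑ a, ∑ b, Z a b • wedgeBilin V (e a) (e b))) j := fun Z j => by
    simp [map_sum, mul_comm]
  obtain ⟨z, hz, hzt⟩ := exists_skewMatrixDeriv_eq_zero k (by simpa using hk)
    (fun j a b => h.repr (ψ (wedgeBilin V (e a) (e b))) j) fun z hz => by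
      obtain ⟨u, rfl⟩ : ∃ u : Fin k ⊕ Fin k → V, z = fun s => e.equivFun (u s) :=
        ⟨fun s => e.equivFun.symm (z s), funext fun s => (e.equivFun.apply_symm_apply _).symm⟩
      simp only [hsum, sum_skewMatrix_smul_wedgeBilin] at hz
      have h0 : ψ ((2 : ℂ) • ∑ i, wedgeBilin V (u (.inl i)) (u (.inr i))) = 0 :=
        h.repr.map_eq_zero_iff.1 (Finsupp.ext hz)
      rw [map_smul, smul_eq_zero_iff_right two_ne_zero] at h0
      have hv := hker _ _ h0
      ext a b
      obtain ⟨φ, hφ⟩ := exists_linearForm_wedgeBilin (e.coord a) (e.coord b)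
      have hφv := congrArg φ hv
      simp only [map_sum, hφ, map_zero, Basis.coord_apply] at hφv
      simp only [skewMatrix, Basis.equivFun_apply, Matrix.zero_apply]
      rw [← hφv]
      exact Finset.sum_congr rfl fun i _ => by ring
  obtain ⟨w, rfl⟩ : ∃ w : Fin k ⊕ Fin k → V, z = fun s => e.equivFun (w s) :=
    ⟨fun s => e.equivFun.symm (z s), funext fun s => (e.equivFun.apply_symm_apply _).symm⟩
  refine ⟨w, LinearIndependent.of_comp e.equivFun.toLinearMap hz, fun v hv => ?_⟩
  let t : Fin k ⊕ Fin k → V := Sum.elim (fun i => -v (.inr i)) (fun i => v (.inl i))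
  have ht : ∑ i, (wedgeBilin V (w (.inl i)) (t (.inr i)) +
      wedgeBilin V (t (.inl i)) (w (.inr i))) = ∑ s, wedgeBilin V (w s) (v s) := by
    simp only [t, Sum.elim_inl, Sum.elim_inr, Fintype.sum_sum_type, Finset.sum_add_distrib]
    simp [wedgeBilin_swap (w _) (v _)]
  have hd := sum_skewMatrixDeriv_smul_wedgeBilin e w t
  rw [ht] at hd
  have hz0 := hzt (fun s => e.equivFun (t s)) fun j => by
    rw [hsum, hd, map_smul, hv]
    simp
  simp only [hz0, Matrix.zero_apply, zero_smul, Finset.sum_const_zero] at hd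
  exact (smul_eq_zero_iff_right two_ne_zero).1 hd.symm

/-- The map `Σ²W → W ⊗ V`, `w·w' ↦ w ⊗ w' + w' ⊗ w`. -/
noncomputable def symToTensor {V : Type*} [AddCommGroup V] [Module ℂ V] (W : Submodule ℂ V) :
    Sym2Pow ℂ W →ₗ[ℂ] W ⊗[ℂ] V :=
  (Sym2Rel ℂ W).liftQ
    (TensorProduct.map LinearMap.id W.subtype ∘ₗ
      (LinearMap.id + (TensorProduct.comm ℂ W W).toLinearMap)) <| by
    rw [Submodule.span_le]
    rintro _ ⟨a, b, rfl⟩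
    simp

theorem symToTensor_mk {V : Type*} [AddCommGroup V] [Module ℂ V] (W : Submodule ℂ V) (a b : W) :
    symToTensor W (Sym2Pow.mk ℂ a b) = a ⊗ₜ[ℂ] (b : V) + b ⊗ₜ[ℂ] (a : V) := by
  simp [symToTensor, Sym2Pow.mk]

theorem Sym2Pow.mk_comm {K W : Type*} [CommRing K] [AddCommGroup W] [Module K W] (a b : W) :
    Sym2Pow.mk K a b = Sym2Pow.mk K b a :=
  (Submodule.Quotient.eq _).2 (Submodule.subset_span ⟨a, b, rfl⟩)

theorem symToTensor_injective {V : Type*} [AddCommGroup V] [Module ℂ V] (W : Submodule ℂ V) :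
    Function.Injective (symToTensor W) := by
  obtain ⟨π, hπ⟩ := W.subtype.exists_leftInverse_of_injective W.ker_subtype
  have hπ' : ∀ a : W, π a = a := fun a => LinearMap.congr_fun hπ a
  let ρ : W ⊗[ℂ] V →ₗ[ℂ] Sym2Pow ℂ W := (Sym2Rel ℂ W).mkQ ∘ₗ TensorProduct.map LinearMap.id π
  have hρ : ρ ∘ₗ symToTensor W = (2 : ℂ) • LinearMap.id := by
    have hρ_tmul : ∀ a b : W, ρ (a ⊗ₜ[ℂ] (b : V)) = Sym2Pow.mk ℂ a b := fun a b => by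
      simp [ρ, hπ', Sym2Pow.mk]
    refine Submodule.linearMap_qext _ (TensorProduct.ext' fun a b => ?_)
    change ρ (symToTensor W (Sym2Pow.mk ℂ a b)) = (2 : ℂ) • Sym2Pow.mk ℂ a b
    rw [symToTensor_mk, map_add, hρ_tmul, hρ_tmul, Sym2Pow.mk_comm b a, two_smul]
  refine (injective_iff_map_eq_zero _).2 fun x hx => ?_
  have := LinearMap.congr_fun hρ x
  simpa [hx] using this.symm

/-- If `w` is a basis of `W` and `∑ w ∧ v = 0` in `⋀²V`, then `∑ w ⊗ v` comes from `Σ²W`. -/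
theorem sum_tmul_mem_range_symToTensor {V σ : Type*} [AddCommGroup V] [Module ℂ V] [Fintype σ]
    (W : Submodule ℂ V) (w : Basis σ ℂ W) (v : σ → V)
    (h : ∑ s, wedgeBilin V (w s) (v s) = 0) :
    ∑ s, w s ⊗ₜ[ℂ] v s ∈ LinearMap.range (symToTensor W) := by
  classical
  obtain ⟨π, hπ⟩ := W.subtype.exists_leftInverse_of_injective W.ker_subtype
  have hπ' : ∀ a : W, π a = a := fun a => LinearMap.congr_fun hπ a
  let m : σ → σ → ℂ := fun s t => w.coord s (π (v t))
  have hfg : ∀ f g : Module.Dual ℂ V, ∑ s, f (w s) * g (v s) = ∑ s, g (w s) * f (v s) :=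
    fun f g => by
      obtain ⟨φ, hφ⟩ := exists_linearForm_wedgeBilin f g
      have := congrArg φ h
      simpa [hφ, sub_eq_zero] using this
  have hm : ∀ s t, m s t = m t s := fun s t => by
    have := hfg (w.coord s ∘ₗ π) (w.coord t ∘ₗ π)
    simpa [hπ', Finsupp.single_apply, m] using this.symm
  have hv : ∀ s, v s = ∑ t, m s t • (w t : V) := fun s => by
    refine (Module.forall_dual_apply_eq_zero_iff ℂ _).1 (fun g => ?_) |> sub_eq_zero.1
    have := hfg (w.coord s ∘ₗ π) g
    simpa [hπ', Finsupp.single_apply, m, sub_eq_zero, mul_comm] using this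
  refine ⟨(2⁻¹ : ℂ) • ∑ s, ∑ t, m s t • Sym2Pow.mk ℂ (w s) (w t), ?_⟩
  have hsum : ∑ s, w s ⊗ₜ[ℂ] v s = ∑ s, ∑ t, m s t • w s ⊗ₜ[ℂ] (w t : V) :=
    Finset.sum_congr rfl fun s _ => by
      conv_lhs => rw [hv s]
      simp only [TensorProduct.tmul_sum, TensorProduct.tmul_smul]
  have hswap : ∑ s, ∑ t, m s t • w t ⊗ₜ[ℂ] (w s : V) = ∑ s, ∑ t, m s t • w s ⊗ₜ[ℂ] (w t : V) := by
    rw [Finset.sum_comm]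
    exact Finset.sum_congr rfl fun s _ => Finset.sum_congr rfl fun t _ => by rw [hm]
  simp only [map_smul, map_sum, symToTensor_mk, smul_add, Finset.sum_add_distrib, hswap, ← hsum]
  module

/-- **Theorem 4.2**: let `ψ : ⋀²V → H` be a linear map of finite-dimensional complex vector
spaces with `dim V = q`, and let `1 ≤ k` with `2k ≤ q`. If every non-zero element of `ker ψ`
has rank bigger than `2k` (i.e. no non-zero element of `ker ψ` is a sum of at most `k`
decomposable bivectors), then there is a `2k`-dimensional subspace `W ⊆ V` such that the complex
`0 → Σ²W → W ⊗ V → H` is exact, where `μ₀(w·w') = w⊗w' + w'⊗w` and `μ₁(w⊗v) = ψ(w ∧ v)`: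
`μ₀` is injective and `ker μ₁ = im μ₀`. -/
theorem stmt0 {V H : Type*} [AddCommGroup V] [Module ℂ V] [FiniteDimensional ℂ V]
    [AddCommGroup H] [Module ℂ H] [FiniteDimensional ℂ H]
    (q k : ℕ) (hq : Module.finrank ℂ V = q) (hk : 1 ≤ k) (hkq : 2 * k ≤ q)
    (ψ : (⋀[ℂ]^2 V) →ₗ[ℂ] H)
    (hker : ∀ v : ⋀[ℂ]^2 V, ψ v = 0 → v ≠ 0 →
      ¬ ∃ x y : Fin k → V, v = ∑ i, wedge (x i) (y i)) :
    ∃ W : Submodule ℂ V, Module.finrank ℂ W = 2 * k ∧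
      ∃ (μ₀ : Sym2Pow ℂ W →ₗ[ℂ] (W ⊗[ℂ] V)) (μ₁ : (W ⊗[ℂ] V) →ₗ[ℂ] H),
        (∀ a b : W, μ₀ (Sym2Pow.mk ℂ a b) = a ⊗ₜ[ℂ] (b : V) + b ⊗ₜ[ℂ] (a : V)) ∧
        (∀ (a : W) (v : V), μ₁ (a ⊗ₜ[ℂ] v) = ψ (wedge (a : V) v)) ∧
        Function.Injective μ₀ ∧ LinearMap.ker μ₁ = LinearMap.range μ₀ := by
  have hker' : ∀ x y : Fin k → V, ψ (∑ i, wedgeBilin V (x i) (y i)) = 0 →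
      ∑ i, wedgeBilin V (x i) (y i) = 0 := fun x y h =>
    by_contra fun h0 => hker _ h h0 ⟨x, y, rfl⟩
  obtain ⟨w, hw, hwv⟩ := exists_linearIndependent_sum_wedgeBilin_eq_zero k (hq ▸ hkq) ψ hker'
  let W := Submodule.span ℂ (Set.range w)
  let μ₁ : W ⊗[ℂ] V →ₗ[ℂ] H := ψ ∘ₗ TensorProduct.lift (wedgeBilin V ∘ₗ W.subtype)
  have hμ₁ : ∀ (a : W) (v : V), μ₁ (a ⊗ₜ[ℂ] v) = ψ (wedge (a : V) v) := fun a v => by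
    simp [μ₁, wedgeBilin_apply]
  refine ⟨W, by simp [W, finrank_span_eq_card hw, two_mul], symToTensor W, μ₁, symToTensor_mk W,
    hμ₁, symToTensor_injective W, le_antisymm (fun τ hτ => ?_) ?_⟩
  · let b : Basis (Fin k ⊕ Fin k) ℂ W := Basis.span hw
    have hb : ∀ s, (b s : V) = w s := fun s =>
      congrArg Subtype.val (Basis.span_apply hw s)
    obtain ⟨v, rfl⟩ : ∃ v : Fin k ⊕ Fin k → V, τ = ∑ s, b s ⊗ₜ[ℂ] v s := by
      obtain ⟨v, rfl⟩ := TensorProduct.eq_repr_basis_left b τ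
      exact ⟨v, Finsupp.sum_fintype _ _ fun s => TensorProduct.tmul_zero _ _⟩
    refine sum_tmul_mem_range_symToTensor W b v ?_
    simp only [hb]
    refine hwv v ?_
    simpa [hμ₁, hb, wedgeBilin_apply] using hτ
  · rintro _ ⟨x, rfl⟩
    obtain ⟨x, rfl⟩ := Submodule.Quotient.mk_surjective _ x
    induction x with
    | zero => simp
    | add x y hx hy => rw [Submodule.Quotient.mk_add, map_add]; exact add_mem hx hy
    | tmul a b =>
      change μ₁ (symToTensor W (Sym2Pow.mk ℂ a b)) = 0
      rw [symToTensor_mk, map_add, hμ₁, hμ₁, ← wedgeBilin_apply, ← wedgeBilin_apply,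
        wedgeBilin_swap (a : V) b, map_neg, add_neg_cancel]
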